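/- Let 1 ≤ k ≤ n, let ω : (ℝⁿ)ᵏ → ℝ be an alternating k-linear map with operator norm ‖ω‖ (the supremum of |ω(v_1, …, v_k)| over unit vectors v_1, …, v_k), and let A : ℝᵏ → ℝⁿ be a linear map. Then |ω(A e_1, …, A e_k)| ≤ ‖ω‖ · √(det(Aᵀ A)), where e_1, …, e_k is the standard basis of ℝᵏ and Aᵀ is the (Euclidean) adjoint of A. -/

import Mathlib

/-! Take an orthonormal basis `b` of `ℝᵏ` made of eigenvectors of `AᵀA`, with eigenvalues `λᵢ`.
Then `‖A bᵢ‖² = ⟪bᵢ, AᵀA bᵢ⟫ = λᵢ`, so the Jacobian `√(det(AᵀA))` is `∏ ‖A bᵢ‖`.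
The pullback of `ω` along `A` is a top-degree form on `ℝᵏ`, hence takes the same value up to sign
on the standard basis and on `b`. Scaling the vectors `A bᵢ` to unit length
(`abs_le_sSup_mul_prod_norm`) bounds `|ω(A b₁, …, A b_k)|` by `‖ω‖ ∏ ‖A bᵢ‖`. -/

open MeasureTheory

/-- The supremum defining `‖ω‖` is over a bounded set: when `v` consists of unit vectors, all
coordinates of the `vᵢ` are at most `1` in absolute value, so `|ω v|` is at most the sum of the
absolute values of the coefficients of `ω`. -/
lemma bddAbove_abs_on_unit {n k : ℕ}
    (ω : AlternatingMap ℝ (EuclideanSpace ℝ (Fin n)) ℝ (Fin k)) :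
    BddAbove {c : ℝ | ∃ v : Fin k → EuclideanSpace ℝ (Fin n),
      (∀ i, ‖v i‖ = 1) ∧ c = |ω v|} := by
  let e := EuclideanSpace.basisFun (Fin n) ℝ
  refine ⟨∑ r : Fin k → Fin n, |ω fun i => e (r i)|, ?_⟩
  rintro c ⟨v, hv, rfl⟩
  have hexp : ω v = ∑ r : Fin k → Fin n, (∏ i, v i (r i)) * ω fun i => e (r i) := by
    have h : v = fun i => ∑ j, v i j • e j := by
      funext i
      simpa [e] using (e.sum_repr (v i)).symm
    conv_lhs => rw [h]
    rw [← AlternatingMap.coe_multilinearMap, MultilinearMap.map_sum]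
    simp_rw [MultilinearMap.map_smul_univ, smul_eq_mul]
  rw [hexp]
  refine (Finset.abs_sum_le_sum_abs _ _).trans (Finset.sum_le_sum fun r _ => ?_)
  rw [abs_mul, Finset.abs_prod]
  refine mul_le_of_le_one_left (abs_nonneg _) (Finset.prod_le_one (fun _ _ => abs_nonneg _) ?_)
  intro i _
  rw [← hv i]
  exact PiLp.norm_apply_le (v i) (r i)

lemma abs_le_sSup_mul_prod_norm {n k : ℕ}
    (ω : AlternatingMap ℝ (EuclideanSpace ℝ (Fin n)) ℝ (Fin k))
    (v : Fin k → EuclideanSpace ℝ (Fin n)) :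
    |ω v| ≤ sSup {c : ℝ | ∃ v : Fin k → EuclideanSpace ℝ (Fin n),
      (∀ i, ‖v i‖ = 1) ∧ c = |ω v|} * ∏ i, ‖v i‖ := by
  by_cases h : ∃ i, v i = 0
  · obtain ⟨i, hi⟩ := h
    rw [ω.map_coord_zero i hi, Finset.prod_eq_zero (Finset.mem_univ i) (by simp [hi])]
    simp
  · push Not at h
    have hv : v = fun i => ‖v i‖ • (‖v i‖⁻¹ • v i) := by
      funext i
      rw [smul_inv_smul₀ (norm_ne_zero_iff.2 (h i))]
    have hprod : |ω v| = |ω fun i => ‖v i‖⁻¹ • v i| * ∏ i, ‖v i‖ := by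
      conv_lhs => rw [hv]
      rw [ω.map_smul_univ, smul_eq_mul, abs_mul, Finset.abs_prod, mul_comm]
      simp
    rw [hprod]
    refine mul_le_mul_of_nonneg_right (le_csSup (bddAbove_abs_on_unit ω) ⟨_, fun i => ?_, rfl⟩)
      (Finset.prod_nonneg fun _ _ => norm_nonneg _)
    rw [norm_smul, norm_inv, norm_norm, inv_mul_cancel₀ (norm_ne_zero_iff.2 (h i))]

/-- A top-degree form takes the same absolute value on any two orthonormal bases, because the
change of basis has determinant `±1`. -/
lemma abs_apply_orthonormalBasis_eq {ι F : Type*} [Fintype ι] [DecidableEq ι]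
    [NormedAddCommGroup F] [InnerProductSpace ℝ F] (η : AlternatingMap ℝ F ℝ ι)
    (a b : OrthonormalBasis ι ℝ F) : |η a| = |η b| := by
  have h : η a = η b * b.toBasis.det a := by
    simpa using congrArg (fun f => f a) (η.eq_smul_basis_det b.toBasis)
  rcases b.det_to_matrix_orthonormalBasis_real a with hd | hd <;> simp [h, hd]

/-- For an alternating `k`-linear map `ω : (ℝⁿ)ᵏ → ℝ` and a linear map `A : ℝᵏ → ℝⁿ`,
the value of `ω` on the columns `A e₁, …, A e_k` is bounded by the operator norm of `ω`
(the supremum of `|ω(v₁,…,v_k)|` over unit vectors) times the `k`-dimensional Jacobian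
`√(det(AᵀA))` of `A`. -/
theorem alternating_le_opNorm_mul_jacobian (n k : ℕ) (hk : 1 ≤ k) (hkn : k ≤ n)
    (ω : AlternatingMap ℝ (EuclideanSpace ℝ (Fin n)) ℝ (Fin k))
    (A : EuclideanSpace ℝ (Fin k) →ₗ[ℝ] EuclideanSpace ℝ (Fin n)) :
    |ω (fun i => A (EuclideanSpace.single i 1))| ≤
      sSup {c : ℝ | ∃ v : Fin k → EuclideanSpace ℝ (Fin n),
          (∀ i, ‖v i‖ = 1) ∧ c = |ω v|} *
        Real.sqrt (LinearMap.det (LinearMap.adjoint A ∘ₗ A)) := by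
  have hS := A.isSymmetric_adjoint_comp_self
  have hfr : Module.finrank ℝ (EuclideanSpace ℝ (Fin k)) = k := finrank_euclideanSpace_fin
  let b := hS.eigenvectorBasis hfr
  have hnorm : ∀ i, hS.eigenvalues hfr i = ‖A (b i)‖ ^ 2 := fun i => by
    rw [← real_inner_self_eq_norm_sq, ← LinearMap.adjoint_inner_right, ← LinearMap.comp_apply,
      hS.apply_eigenvectorBasis hfr i]
    simp [b, inner_smul_right]
  have hdet : √(LinearMap.det (LinearMap.adjoint A ∘ₗ A)) = ∏ i, ‖A (b i)‖ := by
    rw [hS.det_eq_prod_eigenvalues hfr]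
    simp only [hnorm, RCLike.ofReal_real_eq_id, id, Finset.prod_pow]
    exact Real.sqrt_sq (Finset.prod_nonneg fun _ _ => norm_nonneg _)
  have hω : |ω (fun i => A (EuclideanSpace.single i 1))| = |ω (fun i => A (b i))| := by
    simpa [Function.comp_def] using
      abs_apply_orthonormalBasis_eq (ω.compLinearMap A) (EuclideanSpace.basisFun (Fin k) ℝ) b
  rw [hdet, hω]
  exact abs_le_sSup_mul_prod_norm ω _
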